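/- For every worker w the set {f ∈ F : (w,f) ∈ S*} is nonempty, and the function μ_W that sends each worker w to the ≻_w-greatest firm in {f ∈ F : (w,f) ∈ S*} is a bijection from W to F and is a stable matching of the matching problem. -/

import Mathlib

/-- `(w,f)` blocks the matching `μ`: `f ≻_w μ(w)` and `w ≻_f μ⁻¹(f)`.
`prefW w f f'` means worker `w` strictly prefers firm `f` to firm `f'`;
`prefF f w w'` means firm `f` strictly prefers worker `w` to worker `w'`. -/
def Blocks {W F : Type*} (prefW : W → F → F → Prop) (prefF : F → W → W → Prop)
    (μ : W ≃ F) (w : W) (f : F) : Prop :=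
  prefW w f (μ w) ∧ prefF f w (μ.symm f)

/-- A matching is stable if no pair blocks it. -/
def IsStableMatching {W F : Type*} (prefW : W → F → F → Prop)
    (prefF : F → W → W → Prop) (μ : W ≃ F) : Prop :=
  ∀ w f, ¬ Blocks prefW prefF μ w f

/-- A pair `(w,f)` is unattractive in `S`. -/
def Unattractive {W F : Type*} (prefW : W → F → F → Prop) (prefF : F → W → W → Prop)
    (S : Set (W × F)) (w : W) (f : F) : Prop :=
  (∃ f', (w, f') ∈ S ∧ prefW w f' f ∧
      ∀ w', w' ≠ w → (w', f') ∈ S → prefF f' w w') ∨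
  (∃ w', (w', f) ∈ S ∧ prefF f w' w ∧
      ∀ f'', f'' ≠ f → (w', f'') ∈ S → prefW w' f f'')

/-- `delta S` is `S` with all pairs unattractive in `S` removed. -/
def delta {W F : Type*} (prefW : W → F → F → Prop) (prefF : F → W → W → Prop)
    (S : Set (W × F)) : Set (W × F) :=
  {p ∈ S | ¬ Unattractive prefW prefF S p.1 p.2}

/-- The normal form: the fixed point of `delta` reached by iterating from `W × F`.
Since `delta S ⊆ S` and `W × F` is finite, `Fintype.card (W × F)` iterations suffice. -/
def NormalForm (W F : Type*) [Fintype W] [Fintype F]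
    (prefW : W → F → F → Prop) (prefF : F → W → W → Prop) : Set (W × F) :=
  (delta prefW prefF)^[Fintype.card (W × F)] Set.univ

/-- `μ` is `S`-stable: `S`-admissible and no pair of `S` blocks it within `S`. -/
def SStable {W F : Type*} (prefW : W → F → F → Prop) (prefF : F → W → W → Prop)
    (S : Set (W × F)) (μ : W ≃ F) : Prop :=
  (∀ w, (w, μ w) ∈ S) ∧
  ∀ w f, (w, f) ∈ S → ¬ (prefW w f (μ w) ∧ prefF f w (μ.symm f))

/-- Arcs of the matching digraph `D(S)`: from `(w,f)` to `(w,f')` whenever `f' ≻_w f`,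
and from `(w,f)` to `(w',f)` whenever `w' ≻_f w`. -/
def Arc {W F : Type*} (prefW : W → F → F → Prop) (prefF : F → W → W → Prop)
    (S : Set (W × F)) (p q : W × F) : Prop :=
  p ∈ S ∧ q ∈ S ∧
    ((p.1 = q.1 ∧ prefW p.1 q.2 p.2) ∨ (p.2 = q.2 ∧ prefF p.2 q.1 p.1))

/-- `D(S)` contains a directed cycle: distinct vertices `c 0, …, c (n-1)` with `n ≥ 1`,
`c n = c 0`, and an arc from each vertex to the next. -/
def HasDirectedCycle {W F : Type*} (prefW : W → F → F → Prop)
    (prefF : F → W → W → Prop) (S : Set (W × F)) : Prop :=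
  ∃ (n : ℕ) (c : Fin (n + 1) → W × F), 0 < n ∧
    Function.Injective (fun i : Fin n => c i.castSucc) ∧
    c (Fin.last n) = c 0 ∧
    ∀ i : Fin n, Arc prefW prefF S (c i.castSucc) (c i.succ)

/-- The preference lists possess a cycle: there are `k ≥ 2`, distinct workers
`w_1, …, w_k` and distinct firms `f_1, …, f_k` (indexed by `ZMod k`) with
`f_{j+1} ≻_{w_j} f_j` and `w_j ≻_{f_j} w_{j-1}` for all `j`, indices modulo `k`. -/
def PrefCycle {W F : Type*} (prefW : W → F → F → Prop)
    (prefF : F → W → W → Prop) : Prop :=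
  ∃ k : ℕ, 2 ≤ k ∧ ∃ (ws : ZMod k → W) (fs : ZMod k → F),
    Function.Injective ws ∧ Function.Injective fs ∧
    ∀ j : ZMod k, prefW (ws j) (fs (j + 1)) (fs j) ∧ prefF (fs j) (ws j) (ws (j - 1))

section StableMatching

variable {W F : Type*} {prefW : W → F → F → Prop} {prefF : F → W → W → Prop}

/-- A nonempty set in a finite strict total order has a greatest element. -/
theorem exists_greatest_of_nonempty {α : Type*} [Finite α] (r : α → α → Prop)
    (hr : IsStrictTotalOrder α r) {s : Set α} (hs : s.Nonempty) :
    ∃ m ∈ s, ∀ x ∈ s, x ≠ m → r m x := by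
  obtain ⟨m, hm, hmin⟩ := (Finite.wellFounded_of_trans_of_irrefl r).has_min s hs
  refine ⟨m, hm, fun x hx hne => ?_⟩
  rcases trichotomous_of r m x with h | h | h
  · exact h
  · exact absurd h.symm hne
  · exact absurd h (hmin x hx)

theorem delta_subset (S : Set (W × F)) : delta prefW prefF S ⊆ S :=
  fun _ hp => hp.1

theorem delta_iterate_fixed [Finite W] [Finite F] (k : ℕ) (S : Set (W × F))
    (hk : S.ncard ≤ k) :
    delta prefW prefF ((delta prefW prefF)^[k] S) = (delta prefW prefF)^[k] S := by
  induction k generalizing S with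
  | zero =>
    have hS : S = ∅ := (Set.ncard_eq_zero S.toFinite).1 (Nat.le_zero.1 hk)
    subst hS
    exact Set.subset_empty_iff.1 (delta_subset _)
  | succ k ih =>
    by_cases h : delta prefW prefF S = S
    · rw [Function.iterate_fixed h, h]
    · rw [Function.iterate_succ_apply]
      refine ih _ (Nat.le_of_lt_succ (lt_of_lt_of_le ?_ hk))
      exact Set.ncard_lt_ncard ((delta_subset S).ssubset_of_ne h) S.toFinite

theorem delta_normalForm [Fintype W] [Fintype F] :
    delta prefW prefF (NormalForm W F prefW prefF) = NormalForm W F prefW prefF := by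
  refine delta_iterate_fixed _ _ ?_
  rw [Set.ncard_univ, Nat.card_eq_fintype_card]

theorem unattractive_swap {S : Set (W × F)} {w : W} {f : F} :
    Unattractive prefF prefW (Prod.swap ⁻¹' S) f w ↔ Unattractive prefW prefF S w f :=
  or_comm

/-- If some firm better than `f` for `w` ranks `w` first in `S`, then the best such firm
forms with `w` a pair that is not unattractive in `S`. -/
theorem exists_not_unattractive [Finite F] (hW : ∀ w, IsStrictTotalOrder F (prefW w))
    (hF : ∀ f, IsStrictTotalOrder W (prefF f)) {S : Set (W × F)} {w : W} {f : F}
    (h : ∃ f', (w, f') ∈ S ∧ prefW w f' f ∧ ∀ w', w' ≠ w → (w', f') ∈ S → prefF f' w w') :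
    ∃ f', ((w, f') ∈ S ∧ ¬ Unattractive prefW prefF S w f') ∧ prefW w f' f ∧
      ∀ w', w' ≠ w → (w', f') ∈ S → prefF f' w w' := by
  have := hW
  have := hF
  obtain ⟨g, ⟨hgS, hgf, hgtop⟩, hg⟩ := exists_greatest_of_nonempty (prefW w) (hW w)
    (s := {f' | (w, f') ∈ S ∧ prefW w f' f ∧ ∀ w', w' ≠ w → (w', f') ∈ S → prefF f' w w'}) h
  refine ⟨g, ⟨hgS, ?_⟩, hgf, hgtop⟩
  rintro (⟨f', hf'S, hf'g, hf'top⟩ | ⟨w', hw'S, hw'w, -⟩)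
  · have hne : f' ≠ g := by
      rintro rfl
      exact irrefl_of (prefW w) _ hf'g
    exact asymm_of (prefW w) hf'g
      (hg f' ⟨hf'S, trans_of (prefW w) hf'g hgf, hf'top⟩ hne)
  · have hne : w' ≠ w := by
      rintro rfl
      exact irrefl_of (prefF g) _ hw'w
    exact asymm_of (prefF g) hw'w (hgtop w' hne hw'S)

theorem Unattractive.delta [Finite W] [Finite F]
    (hW : ∀ w, IsStrictTotalOrder F (prefW w)) (hF : ∀ f, IsStrictTotalOrder W (prefF f))
    {S : Set (W × F)} {w : W} {f : F} (h : Unattractive prefW prefF S w f) :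
    Unattractive prefW prefF (delta prefW prefF S) w f := by
  rcases h with h | h
  · obtain ⟨f', hf', hpref, htop⟩ := exists_not_unattractive hW hF h
    exact Or.inl ⟨f', hf', hpref, fun w' hne hw' => htop w' hne hw'.1⟩
  · obtain ⟨w', ⟨hw'S, hw'⟩, hpref, htop⟩ :=
      exists_not_unattractive (S := Prod.swap ⁻¹' S) hF hW h
    exact Or.inr ⟨w', ⟨hw'S, fun hu => hw' (unattractive_swap.2 hu)⟩, hpref,
      fun f' hne hf' => htop f' hne hf'.1⟩

/-- Every pair deleted on the way to the normal form is still unattractive in it. -/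
theorem unattractive_of_notMem_normalForm [Fintype W] [Fintype F]
    (hW : ∀ w, IsStrictTotalOrder F (prefW w)) (hF : ∀ f, IsStrictTotalOrder W (prefF f))
    {w : W} {f : F} (h : (w, f) ∉ NormalForm W F prefW prefF) :
    Unattractive prefW prefF (NormalForm W F prefW prefF) w f := by
  unfold NormalForm at h ⊢
  generalize Fintype.card (W × F) = k at h ⊢
  induction k with
  | zero => exact absurd (Set.mem_univ _) h
  | succ k ih =>
    rw [Function.iterate_succ_apply'] at h ⊢
    refine Unattractive.delta hW hF ?_
    by_contra hu
    exact h ⟨by_contra fun hS => hu (ih hS), hu⟩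

theorem not_unattractive_of_mem_normalForm [Fintype W] [Fintype F] {w : W} {f : F}
    (h : (w, f) ∈ NormalForm W F prefW prefF) :
    ¬ Unattractive prefW prefF (NormalForm W F prefW prefF) w f := by
  rw [← delta_normalForm] at h
  exact h.2

theorem exists_mem_normalForm [Fintype W] [Fintype F]
    (hcard : Fintype.card W = Fintype.card F)
    (hW : ∀ w, IsStrictTotalOrder F (prefW w)) (hF : ∀ f, IsStrictTotalOrder W (prefF f))
    (w : W) : ∃ f : F, (w, f) ∈ NormalForm W F prefW prefF := by
  have := hW
  have := hF
  by_contra! hw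
  have hex : ∀ f, ∃ w', (w', f) ∈ NormalForm W F prefW prefF ∧
      ∀ f'', f'' ≠ f → (w', f'') ∈ NormalForm W F prefW prefF → prefW w' f f'' := by
    intro f
    rcases unattractive_of_notMem_normalForm hW hF (hw f) with
      ⟨f', hf', -, -⟩ | ⟨w', hw', -, htop⟩
    · exact absurd hf' (hw f')
    · exact ⟨w', hw', htop⟩
  choose g hgS hgtop using hex
  have hinj : Function.Injective g := by
    intro a b hab
    by_contra hne
    have h₁ := hgtop a b (Ne.symm hne) (hab ▸ hgS b)
    have h₂ := hgtop b a hne (hab ▸ hgS a)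
    rw [hab] at h₁
    exact asymm_of (prefW (g b)) h₁ h₂
  obtain ⟨f, hf⟩ := ((Fintype.bijective_iff_injective_and_card g).2 ⟨hinj, hcard.symm⟩).2 w
  exact hw f (hf ▸ hgS f)

end StableMatching

/-- For every worker `w` the set `{f | (w,f) ∈ S*}` is nonempty, and the map sending
each worker to their `≻_w`-greatest firm in that set is a bijection and a stable matching. -/
theorem worker_optimal_stable {W F : Type*} [Fintype W] [Fintype F] [Nonempty W]
    (hcard : Fintype.card W = Fintype.card F)
    (prefW : W → F → F → Prop) (prefF : F → W → W → Prop)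
    (hW : ∀ w, IsStrictTotalOrder F (prefW w))
    (hF : ∀ f, IsStrictTotalOrder W (prefF f)) :
    (∀ w : W, ∃ f : F, (w, f) ∈ NormalForm W F prefW prefF) ∧
    ∃ μ : W ≃ F, IsStableMatching prefW prefF μ ∧
      ∀ w : W, (w, μ w) ∈ NormalForm W F prefW prefF ∧
        ∀ f, (w, f) ∈ NormalForm W F prefW prefF → f ≠ μ w → prefW w (μ w) f := by
  have := hW
  have := hF
  have hne := exists_mem_normalForm hcard hW hF
  refine ⟨hne, ?_⟩
  choose m hmS hmtop using fun w => exists_greatest_of_nonempty (prefW w) (hW w)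
    (s := {f | (w, f) ∈ NormalForm W F prefW prefF}) (hne w)
  have not_prefF : ∀ w w', m w = m w' → ¬ prefF (m w) w w' := by
    intro w w' heq hpref
    refine not_unattractive_of_mem_normalForm (hmS w') (Or.inr ⟨w, heq ▸ hmS w, heq ▸ hpref, ?_⟩)
    exact fun f hf hfS => heq ▸ hmtop w f hfS (heq ▸ hf)
  have hinj : Function.Injective m := by
    intro w w' heq
    rcases trichotomous_of (prefF (m w)) w w' with h | h | h
    · exact absurd h (not_prefF w w' heq)
    · exact h
    · exact absurd (heq ▸ h) (not_prefF w' w heq.symm)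
  let μ : W ≃ F := Equiv.ofBijective m
    ((Fintype.bijective_iff_injective_and_card m).2 ⟨hinj, hcard⟩)
  refine ⟨μ, ?_, fun w => ⟨hmS w, hmtop w⟩⟩
  rintro w f ⟨hwf, hfw⟩
  have not_mem : ∀ f', prefW w f' (μ w) → (w, f') ∉ NormalForm W F prefW prefF := by
    intro f' hpref hS
    have hne' : f' ≠ m w := by
      rintro rfl
      exact irrefl_of (prefW w) _ hpref
    exact asymm_of (prefW w) hpref (hmtop w f' hS hne')
  rcases unattractive_of_notMem_normalForm hW hF (not_mem f hwf) with
    ⟨f', hf'S, hf'f, -⟩ | ⟨w', hw'S, hw'w, htop⟩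
  · exact not_mem f' (trans_of (prefW w) hf'f hwf) hf'S
  · have hμ : μ w' = f := by
      by_contra hμf
      exact asymm_of (prefW w') (htop (μ w') hμf (hmS w'))
        (hmtop w' f hw'S (Ne.symm hμf))
    rw [← hμ, Equiv.symm_apply_apply, hμ] at hfw
    exact asymm_of (prefF f) hfw hw'w
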